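/- Define γ(n) = π/4 − arcsin(cos(π/n)/√2) for positive integers n. Then, as n → ∞ over the positive integers, γ(n) = π²/(2n²) − π⁴/(6n⁴) + O(1/n⁶); that is, the function n ↦ π/4 − arcsin(cos(π/n)/√2) − π²/(2n²) + π⁴/(6n⁴) is O(n⁻⁶) along the filter atTop. -/

import Mathlib

/-!
Twice the angle `γ = π / 4 - arcsin (cos x / √2)` has sine `cos (2 * arcsin (cos x / √2)) =
1 - cos x ^ 2 = sin x ^ 2`, so that `γ = arcsin (sin x ^ 2) / 2` near `x = 0`. The expansion of `γ`
now follows from `arcsin u = u + O(u ^ 3)` and `sin x ^ 2 = x ^ 2 - x ^ 4 / 3 + O(x ^ 6)`.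
-/

open Real Filter Asymptotics

open scoped Topology

theorem arcsin_one_sub_two_mul_sq {y : ℝ} (hy₀ : 0 ≤ y) (hy₁ : y ≤ 1) :
    arcsin (1 - 2 * y ^ 2) = π / 2 - 2 * arcsin y := by
  have hsin : sin (π / 2 - 2 * arcsin y) = 1 - 2 * y ^ 2 := by
    rw [sin_pi_div_two_sub, cos_two_mul_eq_one_sub, sin_arcsin (by linarith) hy₁]
  have hnonneg : 0 ≤ arcsin y := arcsin_nonneg.2 hy₀
  have hle : arcsin y ≤ π / 2 := arcsin_le_pi_div_two y
  rw [← hsin, arcsin_sin (by linarith) (by linarith)]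

theorem pi_div_four_sub_arcsin_cos_div_sqrt_two {x : ℝ} (hx : 0 ≤ cos x) :
    π / 4 - arcsin (cos x / √2) = arcsin (sin x ^ 2) / 2 := by
  have hle : cos x / √2 ≤ 1 :=
    div_le_one_of_le₀ ((cos_le_one x).trans (one_le_sqrt.2 one_le_two)) (sqrt_nonneg 2)
  have hsq : sin x ^ 2 = 1 - 2 * (cos x / √2) ^ 2 := by
    rw [div_pow, sq_sqrt zero_le_two, sin_sq]
    ring
  rw [hsq, arcsin_one_sub_two_mul_sq (by positivity) hle]
  ring

theorem arcsin_sub_self_isBigO :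
    (fun u : ℝ => arcsin u - u) =O[𝓝 0] fun u => u ^ 3 := by
  have hcubic : (fun u : ℝ => arcsin u - u) =O[𝓝 0] fun u => arcsin u ^ 3 := by
    refine IsBigO.of_bound (1 / 6) ?_
    filter_upwards [Icc_mem_nhds (neg_one_lt_zero (R := ℝ)) one_pos] with u hu
    have h := abs_sub_sin_le (arcsin u)
    rw [sin_arcsin hu.1 hu.2] at h
    rw [norm_eq_abs, norm_eq_abs, abs_pow]
    linarith
  have hlinear : arcsin =O[𝓝 0] fun u => u := by
    simpa using (differentiableAt_arcsin.2 (by norm_num : (0 : ℝ) ≠ -1 ∧ (0 : ℝ) ≠ 1)).isBigO_sub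
  exact hcubic.trans (hlinear.pow 3)

theorem sin_sub_cubic_isBigO :
    (fun x : ℝ => sin x - (x - x ^ 3 / 6)) =O[𝓝 0] fun x => x ^ 5 := by
  refine IsBigO.of_bound (1 / 100) ?_
  filter_upwards [Icc_mem_nhds (neg_one_lt_zero (R := ℝ)) one_pos] with x hx
  rw [norm_eq_abs, norm_eq_abs, abs_pow]
  linarith [sin_bound (abs_le.2 hx)]

theorem sin_sq_sub_quartic_isBigO :
    (fun x : ℝ => sin x ^ 2 - (x ^ 2 - x ^ 4 / 3)) =O[𝓝 0] fun x => x ^ 6 := by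
  have hpoly : (fun x : ℝ => x - x ^ 3 / 6) =O[𝓝 0] fun x => x := by
    simpa [div_eq_inv_mul] using (isBigO_refl (fun x : ℝ => x) (𝓝 0)).sub
      ((isLittleO_pow_id (𝕜 := ℝ) (by norm_num : 1 < 3)).isBigO.const_mul_left 6⁻¹)
  have hfactor : (fun x : ℝ => (sin x - (x - x ^ 3 / 6)) * (sin x + (x - x ^ 3 / 6)))
      =O[𝓝 0] fun x => x ^ 6 :=
    sin_sub_cubic_isBigO.mul (isEquivalent_sin.isBigO.add hpoly)
  have hsquare : (fun x : ℝ => 1 / 36 * x ^ 6) =O[𝓝 0] fun x => x ^ 6 :=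
    isBigO_const_mul_self _ _ _
  refine (hfactor.add hsquare).congr_left fun x => ?_
  ring

theorem gamma_asymptotics_general :
    (fun x : ℝ => π / 4 - arcsin (cos x / √2) - x ^ 2 / 2 + x ^ 4 / 6) =O[𝓝 0]
      fun x => x ^ 6 := by
  have hcos : ∀ᶠ x : ℝ in 𝓝 0, 0 < cos x :=
    continuous_cos.continuousAt.eventually_const_lt (by simp)
  have hsin_sq : Tendsto (fun x : ℝ => sin x ^ 2) (𝓝 0) (𝓝 0) :=
    (continuous_sin.pow 2).tendsto' 0 0 (by simp)
  have harcsin : (fun x : ℝ => arcsin (sin x ^ 2) - sin x ^ 2) =O[𝓝 0] fun x => x ^ 6 :=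
    (arcsin_sub_self_isBigO.comp_tendsto hsin_sq).trans <| by
      simpa [Function.comp_def, ← pow_mul] using isEquivalent_sin.isBigO.pow 6
  refine ((harcsin.add sin_sq_sub_quartic_isBigO).const_mul_left (1 / 2)).congr' ?_ .rfl
  filter_upwards [hcos] with x hx
  rw [pi_div_four_sub_arcsin_cos_div_sqrt_two hx.le]
  ring

/-- Asymptotics of `γ(n) = π/4 − arcsin(cos(π/n)/√2)`:
`γ(n) = π²/(2n²) − π⁴/(6n⁴) + O(1/n⁶)` as `n → ∞`. -/
theorem gamma_asymptotics :
    (fun n : ℕ =>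
        π / 4 - arcsin (cos (π / n) / Real.sqrt 2) -
          π ^ 2 / (2 * (n : ℝ) ^ 2) + π ^ 4 / (6 * (n : ℝ) ^ 4)) =O[atTop]
      (fun n : ℕ => 1 / (n : ℝ) ^ 6) := by
  refine IsBigO.of_const_mul_right (c := π ^ 6) ?_
  simpa only [Function.comp_def, div_pow, div_div, mul_comm (2 : ℝ), mul_comm (6 : ℝ), mul_one_div]
    using gamma_asymptotics_general.comp_tendsto (tendsto_const_div_atTop_nhds_zero_nat π)
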